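/- For every n ≥ 1 and every x ∈ ℝ, the Legendre polynomials satisfy the derivative identity (1 − x²)·Pₙ′(x) = −n·x·Pₙ(x) + n·Pₙ₋₁(x). -/

import Mathlib

/-- The Legendre polynomials (as real functions), defined by the three-term recursion
`P₀ = 1`, `P₁ = x`, and `(n+2)·Pₙ₊₂(x) = (2n+3)·x·Pₙ₊₁(x) − (n+1)·Pₙ(x)`. -/
noncomputable def legendreP : ℕ → ℝ → ℝ
  | 0 => fun _ => 1
  | 1 => fun x => x
  | (n + 2) => fun x =>
      ((2 * (n : ℝ) + 3) * x * legendreP (n + 1) x - ((n : ℝ) + 1) * legendreP n x) /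
        ((n : ℝ) + 2)

theorem legendreP_rec (n : ℕ) (x : ℝ) : ((n : ℝ) + 2) * legendreP (n + 2) x =
    (2 * (n : ℝ) + 3) * x * legendreP (n + 1) x - ((n : ℝ) + 1) * legendreP n x := by
  have h : (n : ℝ) + 2 ≠ 0 := by positivity
  rw [legendreP]
  field_simp

theorem legendreP_diff (n : ℕ) :
    Differentiable ℝ (legendreP n) ∧ Differentiable ℝ (legendreP (n + 1)) := by
  induction n with
  | zero =>
    constructor
    · unfold legendreP; fun_prop
    · unfold legendreP; fun_prop
  | succ n ih =>
    obtain ⟨h0, h1⟩ := ih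
    refine ⟨h1, ?_⟩
    change Differentiable ℝ (legendreP (n + 2))
    rw [legendreP]
    fun_prop

theorem legendreP_deriv_rec (n : ℕ) (x : ℝ) : ((n : ℝ) + 2) * deriv (legendreP (n + 2)) x =
    (2 * (n : ℝ) + 3) * (legendreP (n + 1) x + x * deriv (legendreP (n + 1)) x)
      - ((n : ℝ) + 1) * deriv (legendreP n) x := by
  have h : (n : ℝ) + 2 ≠ 0 := by positivity
  have h0 := ((legendreP_diff n).1 x).hasDerivAt
  have h1 := ((legendreP_diff n).2 x).hasDerivAt
  have h2 := (((((hasDerivAt_id x).const_mul (2 * (n : ℝ) + 3)).mul h1).sub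
    (h0.const_mul ((n : ℝ) + 1))).div_const ((n : ℝ) + 2))
  have h3 : deriv (legendreP (n + 2)) x =
      ((2 * (n : ℝ) + 3) * 1 * legendreP (n + 1) x +
        (2 * (n : ℝ) + 3) * id x * deriv (legendreP (n + 1)) x -
        ((n : ℝ) + 1) * deriv (legendreP n) x) / ((n : ℝ) + 2) := by
    rw [legendreP]
    exact h2.deriv
  rw [h3]
  simp only [id]
  field_simp

theorem legendreP_pair (n : ℕ) (x : ℝ) :
    (1 - x ^ 2) * deriv (legendreP n) x =
      ((n : ℝ) + 1) * (x * legendreP n x - legendreP (n + 1) x) ∧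
    (1 - x ^ 2) * deriv (legendreP (n + 1)) x =
      ((n : ℝ) + 1) * (legendreP n x - x * legendreP (n + 1) x) := by
  induction n with
  | zero =>
    have e0 : legendreP 0 = fun _ => 1 := by rw [legendreP]
    have e1 : legendreP (0 + 1) = fun y => y := by rw [legendreP]
    rw [e0, e1]
    constructor
    · simp
    · simp; ring
  | succ n ih =>
    obtain ⟨hB, hA⟩ := ih
    have hr := legendreP_rec n x
    have hd := legendreP_deriv_rec n x
    have h : (n : ℝ) + 2 ≠ 0 := by positivity
    rw [show n + 1 + 1 = n + 2 from rfl]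
    push_cast
    constructor
    · linear_combination hA + hr
    · apply mul_left_cancel₀ h
      linear_combination (1 - x ^ 2) * hd + (2 * (n : ℝ) + 3) * x * hA
        - ((n : ℝ) + 1) * hB + ((n : ℝ) + 2) * x * hr

/-- Derivative identity for Legendre polynomials:
`(1 − x²)·Pₙ′(x) = −n·x·Pₙ(x) + n·Pₙ₋₁(x)` for all `n ≥ 1`. -/
theorem legendreP_deriv_identity (n : ℕ) (hn : 1 ≤ n) (x : ℝ) :
    (1 - x ^ 2) * deriv (legendreP n) x =
      -(n : ℝ) * x * legendreP n x + (n : ℝ) * legendreP (n - 1) x := by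
  obtain ⟨k, rfl⟩ : ∃ k, n = k + 1 := ⟨n - 1, by omega⟩
  have h := (legendreP_pair k x).2
  rw [Nat.add_sub_cancel]
  push_cast
  linear_combination h
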